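/- Let F : ℝ^d → ℝ be continuous, ρ-weakly convex with ρ > 0, and bounded below, let ν ∈ (0, 1/ρ), and let Φ = F_ν be the Moreau envelope of F with parameter ν (so Φ is differentiable with L := (2 − νρ)/(ν − ν²ρ)-Lipschitz gradient and ∇Φ(w) = (w − prox_{νF}(w))/ν). Let ε > 0, 0 < β ≤ 1/2, 0 < α ≤ β/(2L), and T ≥ 1. Let w_0 ∈ ℝ^d, v_0 = 0, and for t = 0,…,T−1 let ẑ_t ∈ ℝ^d satisfy ‖ẑ_t − prox_{νF}(w_t)‖² ≤ ν²·ε²/18, and define v_{t+1} = (1−β)·v_t + (β/ν)·(w_t − ẑ_t) and w_{t+1} = w_t − α·v_{t+1}. Then (1/T)·∑_{t=0}^{T−1} ‖∇Φ(w_t)‖² ≤ 2·(Φ(w_0) − inf Φ)/(α·T) + (2/β − 1)·‖∇Φ(w_0)‖²/T + ε²/3. -/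

import Mathlib

open scoped RealInnerProductSpace BigOperators

/-!
The envelope `Φ` needs no derivative: comparing the two minimization problems that define it at `x`
and at `y` gives `Φ y ≤ Φ x + ⟪∇Φ x, y - x⟫ + ‖y - x‖² / (2ν)`, and the quadratic growth of the
strongly convex proximal objective makes `prox`, hence `∇Φ`, Lipschitz. For any pair `Φ`, `∇Φ` with
these two properties the potential `(2 / α) Φ(w) + (2 / β - 2) ‖v - ∇Φ(w)‖²` decreases along the
momentum recursion by at least `‖∇Φ(w)‖²`, up to twice the squared error of the gradient estimate;
telescoping bounds the sum of the squared gradients.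
-/

open Set Filter Topology

section UniformConvexity

variable {E : Type*} [NormedAddCommGroup E] [NormedSpace ℝ E]

lemma add_modulus_norm_sub_le_of_isMinOn {s : Set E} {φ : ℝ → ℝ} {f : E → ℝ} {x y : E}
    (hf : UniformConvexOn s φ f) (hmin : IsMinOn f s x) (hx : x ∈ s) (hy : y ∈ s) :
    f x + φ ‖x - y‖ ≤ f y := by
  have hsegment : ∀ t ∈ Ioo (0 : ℝ) 1, f x + (1 - t) * φ ‖x - y‖ ≤ f y := by
    rintro t ⟨ht0, ht1⟩
    have hconv := hf.2 hx hy (sub_nonneg.2 ht1.le) ht0.le (sub_add_cancel 1 t)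
    have hle : f x ≤ f ((1 - t) • x + t • y) :=
      hmin (hf.1 hx hy (sub_nonneg.2 ht1.le) ht0.le (sub_add_cancel 1 t))
    simp only [smul_eq_mul] at hconv
    exact le_of_mul_le_mul_left (by linarith) ht0
  have hlim : Tendsto (fun t : ℝ => f x + (1 - t) * φ ‖x - y‖) (𝓝[>] 0)
      (𝓝 (f x + φ ‖x - y‖)) := by
    have hcont : Continuous fun t : ℝ => f x + (1 - t) * φ ‖x - y‖ := by fun_prop
    simpa using (hcont.tendsto 0).mono_left nhdsWithin_le_nhds
  exact le_of_tendsto hlim (eventually_of_mem (Ioo_mem_nhdsGT one_pos) hsegment)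

end UniformConvexity

section Young

variable {E : Type*} [SeminormedAddCommGroup E]

lemma norm_add_sq_le_one_add_mul {c : ℝ} (hc : 0 < c) (x y : E) :
    ‖x + y‖ ^ 2 ≤ (1 + c) * ‖x‖ ^ 2 + (1 + c⁻¹) * ‖y‖ ^ 2 :=
  calc ‖x + y‖ ^ 2 ≤ (‖x‖ + ‖y‖) ^ 2 := by gcongr; exact norm_add_le x y
    _ = ‖x‖ ^ 2 + 2 * ‖x‖ * ‖y‖ + ‖y‖ ^ 2 := add_sq _ _
    _ ≤ ‖x‖ ^ 2 + (c * ‖x‖ ^ 2 + c⁻¹ * ‖y‖ ^ 2) + ‖y‖ ^ 2 := by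
        gcongr; exact two_mul_le_add_mul_sq hc
    _ = (1 + c) * ‖x‖ ^ 2 + (1 + c⁻¹) * ‖y‖ ^ 2 := by ring

end Young

section MoreauEnvelope

variable {E : Type*} [NormedAddCommGroup E] {F : E → ℝ} {ρ ν : ℝ} {p : E → E}

/-- The function of `v` whose minimum is the Moreau envelope of `F` at `u`. -/
noncomputable def proxObjective (F : E → ℝ) (ν : ℝ) (u v : E) : ℝ :=
  F v + ‖u - v‖ ^ 2 / (2 * ν)

/-- The Moreau envelope of `F` with parameter `ν`, as an infimum of reals: it is the junk value `0`
wherever the proximal objective is unbounded below. -/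
noncomputable def moreauEnvelope (F : E → ℝ) (ν : ℝ) (u : E) : ℝ :=
  ⨅ v, proxObjective F ν u v

/-- `p` is a proximal map of `F` with parameter `ν`. Taking `p` as data with this property, rather
than choosing minimizers, separates their properties from their existence. -/
def IsProxMap (F : E → ℝ) (ν : ℝ) (p : E → E) : Prop :=
  ∀ u, IsMinOn (proxObjective F ν u) univ (p u)

lemma bddBelow_range_moreauEnvelope (hF : BddBelow (range F)) (hν : 0 ≤ ν) :
    BddBelow (range (moreauEnvelope F ν)) := by
  obtain ⟨c, hc⟩ := hF
  refine ⟨c, forall_mem_range.2 fun u => le_ciInf fun v => ?_⟩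
  have hquad : 0 ≤ ‖u - v‖ ^ 2 / (2 * ν) := by positivity
  exact (hc (mem_range_self v)).trans (le_add_of_nonneg_right hquad)

lemma IsProxMap.moreauEnvelope_eq (hp : IsProxMap F ν p) (u : E) :
    moreauEnvelope F ν u = proxObjective F ν u (p u) :=
  IsLeast.csInf_eq ⟨mem_range_self _, forall_mem_range.2 fun v => hp u (mem_univ v)⟩

variable [InnerProductSpace ℝ E]

/-- `ρ`-weak convexity of a function on the whole space, in the form of convexity after adding
`(ρ / 2) ‖·‖²`. The sign of `ρ` is free: for `ρ < 0` this is strong convexity. -/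
def WeaklyConvex (ρ : ℝ) (F : E → ℝ) : Prop :=
  ConvexOn ℝ univ fun x => F x + ρ / 2 * ‖x‖ ^ 2

/-- The gradient of the Moreau envelope with parameter `ν`, expressed through a proximal map `p`. -/
noncomputable def moreauGradient (ν : ℝ) (p : E → E) (u : E) : E :=
  ν⁻¹ • (u - p u)

lemma WeaklyConvex.strongConvexOn_proxObjective (hF : WeaklyConvex ρ F) (ν : ℝ) (u : E) :
    StrongConvexOn univ (ν⁻¹ - ρ) (proxObjective F ν u) := by
  have hlinear : ConvexOn ℝ univ fun v : E => -(ν⁻¹ * ⟪u, v⟫) + ν⁻¹ / 2 * ‖u‖ ^ 2 :=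
    ((-(ν⁻¹ • innerₛₗ ℝ u)).convexOn convex_univ).add_const _
  refine strongConvexOn_iff_convex.2 ((ConvexOn.add hF hlinear).congr fun v _ => ?_)
  simp only [proxObjective, Pi.add_apply, norm_sub_sq_real, div_eq_mul_inv, mul_inv]
  ring

lemma norm_inv_smul_sub_sub_moreauGradient_sq (ν : ℝ) (p : E → E) (u z : E) :
    ‖ν⁻¹ • (u - z) - moreauGradient ν p u‖ ^ 2 = (ν ^ 2)⁻¹ * ‖z - p u‖ ^ 2 := by
  rw [moreauGradient, ← smul_sub, sub_sub_sub_cancel_left, norm_smul, mul_pow, norm_sub_rev,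
    Real.norm_eq_abs, sq_abs, inv_pow]

lemma inv_le_two_sub_mul_div (hν : 0 < ν) (hνρ : ν * ρ < 1) :
    ν⁻¹ ≤ (2 - ν * ρ) / (ν - ν ^ 2 * ρ) := by
  have hpos : 0 < ν * (1 - ν * ρ) := mul_pos hν (sub_pos.2 hνρ)
  rw [show ν - ν ^ 2 * ρ = ν * (1 - ν * ρ) by ring, le_div_iff₀ hpos, inv_mul_cancel_left₀ hν.ne']
  linarith

namespace IsProxMap

lemma moreauEnvelope_le_add_inner (hp : IsProxMap F ν p) (x y : E) :
    moreauEnvelope F ν y ≤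
      moreauEnvelope F ν x + ⟪moreauGradient ν p x, y - x⟫ + ν⁻¹ / 2 * ‖y - x‖ ^ 2 := by
  have hsq : ‖y - p x‖ ^ 2 = ‖x - p x‖ ^ 2 + 2 * ⟪x - p x, y - x⟫ + ‖y - x‖ ^ 2 := by
    rw [← norm_add_sq_real, add_comm, sub_add_sub_cancel]
  calc moreauEnvelope F ν y ≤ proxObjective F ν y (p x) :=
        (hp.moreauEnvelope_eq y).trans_le (hp y (mem_univ (p x)))
    _ = proxObjective F ν x (p x) + ⟪moreauGradient ν p x, y - x⟫ + ν⁻¹ / 2 * ‖y - x‖ ^ 2 := by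
        simp only [proxObjective, moreauGradient, hsq, real_inner_smul_left, div_eq_mul_inv,
          mul_inv]
        ring
    _ = _ := by rw [hp.moreauEnvelope_eq x]

lemma mul_norm_sub_sq_le_inner (hp : IsProxMap F ν p) (hF : WeaklyConvex ρ F) (x y : E) :
    (ν⁻¹ - ρ) * ‖p x - p y‖ ^ 2 ≤ ν⁻¹ * ⟪x - y, p x - p y⟫ := by
  have hgrowth (u v : E) : proxObjective F ν u (p u) + (ν⁻¹ - ρ) / 2 * ‖p u - v‖ ^ 2 ≤
      proxObjective F ν u v :=
    add_modulus_norm_sub_le_of_isMinOn (hF.strongConvexOn_proxObjective ν u) (hp u)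
      (mem_univ _) (mem_univ _)
  have hx := hgrowth x (p y)
  have hy := hgrowth y (p x)
  rw [norm_sub_rev (p y)] at hy
  have hcross : proxObjective F ν x (p y) - proxObjective F ν x (p x) +
      (proxObjective F ν y (p x) - proxObjective F ν y (p y)) = ν⁻¹ * ⟪x - y, p x - p y⟫ := by
    simp only [proxObjective, norm_sub_sq_real, inner_sub_left, inner_sub_right, div_eq_mul_inv,
      mul_inv]
    ring
  linarith

lemma mul_norm_sub_le (hp : IsProxMap F ν p) (hF : WeaklyConvex ρ F) (hν : 0 < ν) (x y : E) :
    (1 - ν * ρ) * ‖p x - p y‖ ≤ ‖x - y‖ := by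
  rcases (norm_nonneg (p x - p y)).eq_or_lt with hzero | hpos
  · simp [← hzero]
  refine le_of_mul_le_mul_right ?_ hpos
  calc (1 - ν * ρ) * ‖p x - p y‖ * ‖p x - p y‖
      = ν * ((ν⁻¹ - ρ) * ‖p x - p y‖ ^ 2) := by field_simp
    _ ≤ ν * (ν⁻¹ * ⟪x - y, p x - p y⟫) := by
        gcongr ν * ?_; exact hp.mul_norm_sub_sq_le_inner hF x y
    _ = ⟪x - y, p x - p y⟫ := mul_inv_cancel_left₀ hν.ne' _
    _ ≤ ‖x - y‖ * ‖p x - p y‖ := real_inner_le_norm _ _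

lemma norm_moreauGradient_sub_le (hp : IsProxMap F ν p) (hF : WeaklyConvex ρ F) (hν : 0 < ν)
    (hνρ : ν * ρ < 1) (x y : E) :
    ‖moreauGradient ν p x - moreauGradient ν p y‖ ≤
      (2 - ν * ρ) / (ν - ν ^ 2 * ρ) * ‖x - y‖ := by
  have hpos : 0 < 1 - ν * ρ := sub_pos.2 hνρ
  have hprox : ‖p x - p y‖ ≤ ‖x - y‖ / (1 - ν * ρ) :=
    (le_div_iff₀' hpos).2 (hp.mul_norm_sub_le hF hν x y)
  calc ‖moreauGradient ν p x - moreauGradient ν p y‖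
      = ν⁻¹ * ‖(x - y) - (p x - p y)‖ := by
        rw [moreauGradient, moreauGradient, ← smul_sub, sub_sub_sub_comm, norm_smul,
          Real.norm_of_nonneg (inv_nonneg.2 hν.le)]
    _ ≤ ν⁻¹ * (‖x - y‖ + ‖x - y‖ / (1 - ν * ρ)) := by
        gcongr; exact (norm_sub_le _ _).trans (by gcongr)
    _ = (2 - ν * ρ) / (ν - ν ^ 2 * ρ) * ‖x - y‖ := by
        rw [show ν - ν ^ 2 * ρ = ν * (1 - ν * ρ) by ring]
        field_simp
        ring

end IsProxMap

end MoreauEnvelope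

section MomentumTracking

variable {E : Type*} [SeminormedAddCommGroup E] [NormedSpace ℝ E] {g : E → E} {L α β : ℝ}

lemma norm_momentum_sub_sq_le (hβ0 : 0 ≤ β) (hβ1 : β ≤ 1) (m G a : E) :
    ‖(1 - β) • m + β • G - a‖ ^ 2 ≤ (1 - β) * ‖m - a‖ ^ 2 + β * ‖G - a‖ ^ 2 := by
  have hconvex : ConvexOn ℝ univ fun x : E => ‖x‖ ^ 2 :=
    (convexOn_norm convex_univ).pow (fun _ _ => norm_nonneg _) 2
  have hsplit : (1 - β) • m + β • G - a = (1 - β) • (m - a) + β • (G - a) := by module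
  rw [hsplit]
  exact hconvex.2 (mem_univ _) (mem_univ _) (sub_nonneg.2 hβ1) hβ0 (sub_add_cancel 1 β)

lemma norm_sub_gradient_step_sq_le (hg : ∀ x y, ‖g x - g y‖ ≤ L * ‖x - y‖) (hα : 0 ≤ α)
    (hβ : 0 < β) (hαL : α * L ≤ β / 2) (x m : E) :
    ‖m - g (x - α • m)‖ ^ 2 ≤
      (1 + β / 2) * ‖m - g x‖ ^ 2 + (β / 2) * (1 + β / 2) * ‖m‖ ^ 2 := by
  have hdrift : ‖g x - g (x - α • m)‖ ≤ β / 2 * ‖m‖ :=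
    calc ‖g x - g (x - α • m)‖ ≤ L * ‖x - (x - α • m)‖ := hg _ _
      _ = α * L * ‖m‖ := by
          rw [sub_sub_cancel, norm_smul, Real.norm_of_nonneg hα, mul_left_comm, mul_assoc]
      _ ≤ β / 2 * ‖m‖ := by gcongr
  calc ‖m - g (x - α • m)‖ ^ 2 = ‖(m - g x) + (g x - g (x - α • m))‖ ^ 2 := by
        rw [sub_add_sub_cancel]
    _ ≤ (1 + β / 2) * ‖m - g x‖ ^ 2 + (1 + (β / 2)⁻¹) * ‖g x - g (x - α • m)‖ ^ 2 :=
        norm_add_sq_le_one_add_mul (half_pos hβ) _ _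
    _ ≤ (1 + β / 2) * ‖m - g x‖ ^ 2 + (1 + (β / 2)⁻¹) * (β / 2 * ‖m‖) ^ 2 := by gcongr
    _ = (1 + β / 2) * ‖m - g x‖ ^ 2 + (β / 2) * (1 + β / 2) * ‖m‖ ^ 2 := by
        field_simp
        ring

lemma two_div_sub_two_nonneg (hβ0 : 0 < β) (hβ1 : β ≤ 1) : 0 ≤ 2 / β - 2 :=
  sub_nonneg.2 ((le_div_iff₀ hβ0).2 (by linarith))

lemma weighted_norm_sub_gradient_step_sq_le (hg : ∀ x y, ‖g x - g y‖ ≤ L * ‖x - y‖) (hα : 0 ≤ α)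
    (hβ0 : 0 < β) (hβ1 : β ≤ 1) (hαL : α * L ≤ β / 2) (x m : E) :
    (2 / β - 2) * ‖m - g (x - α • m)‖ ^ 2 ≤
      (2 / β - 1 - β) * ‖m - g x‖ ^ 2 + (1 - β / 2) * ‖m‖ ^ 2 :=
  calc (2 / β - 2) * ‖m - g (x - α • m)‖ ^ 2
      ≤ (2 / β - 2) * ((1 + β / 2) * ‖m - g x‖ ^ 2 + (β / 2) * (1 + β / 2) * ‖m‖ ^ 2) :=
        mul_le_mul_of_nonneg_left (norm_sub_gradient_step_sq_le hg hα hβ0 hαL x m)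
          (two_div_sub_two_nonneg hβ0 hβ1)
    _ = (2 / β - 1 - β) * ‖m - g x‖ ^ 2 + (1 - β / 2 - β ^ 2 / 2) * ‖m‖ ^ 2 := by
        field_simp
        ring
    _ ≤ (2 / β - 1 - β) * ‖m - g x‖ ^ 2 + (1 - β / 2) * ‖m‖ ^ 2 := by
        gcongr _ + ?_ * _
        exact sub_le_self _ (by positivity)

lemma weighted_norm_momentum_sub_sq_le (hβ0 : 0 < β) (hβ1 : β ≤ 1) (m G a : E) :
    (2 / β - β) * ‖(1 - β) • m + β • G - a‖ ^ 2 ≤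
      (2 / β - 2) * ‖m - a‖ ^ 2 + 2 * ‖G - a‖ ^ 2 :=
  calc (2 / β - β) * ‖(1 - β) • m + β • G - a‖ ^ 2
      ≤ (2 / β - β) * ((1 - β) * ‖m - a‖ ^ 2 + β * ‖G - a‖ ^ 2) :=
        mul_le_mul_of_nonneg_left (norm_momentum_sub_sq_le hβ0.le hβ1 m G a)
          (by linarith [two_div_sub_two_nonneg hβ0 hβ1])
    _ = (2 / β - 2 - β * (1 - β)) * ‖m - a‖ ^ 2 + (2 - β ^ 2) * ‖G - a‖ ^ 2 := by
        field_simp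
    _ ≤ (2 / β - 2) * ‖m - a‖ ^ 2 + 2 * ‖G - a‖ ^ 2 := by
        gcongr ?_ * _ + ?_ * _
        · exact sub_le_self _ (mul_nonneg hβ0.le (sub_nonneg.2 hβ1))
        · exact sub_le_self _ (sq_nonneg β)

end MomentumTracking

section Momentum

variable {E : Type*} [NormedAddCommGroup E] [InnerProductSpace ℝ E]
  {Φ : E → ℝ} {g : E → E} {L α β : ℝ}

lemma norm_sq_le_of_quadratic_upper_bound
    (hΦ : ∀ x y, Φ y ≤ Φ x + ⟪g x, y - x⟫ + L / 2 * ‖y - x‖ ^ 2) (hα : 0 < α) (x m : E) :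
    ‖g x‖ ^ 2 ≤ 2 / α * (Φ x - Φ (x - α • m)) + ‖m - g x‖ ^ 2 - (1 - α * L) * ‖m‖ ^ 2 := by
  have hdescent := hΦ x (x - α • m)
  rw [sub_sub_cancel_left, inner_neg_right, real_inner_smul_right, norm_neg, norm_smul, mul_pow,
    Real.norm_eq_abs, sq_abs] at hdescent
  have hscaled : 2 * ⟪g x, m⟫ - α * L * ‖m‖ ^ 2 ≤ 2 / α * (Φ x - Φ (x - α • m)) := by
    rw [div_mul_eq_mul_div, le_div_iff₀ hα]
    linarith
  rw [norm_sub_sq_real, real_inner_comm]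
  linarith

/-- The Lyapunov function of the momentum recursion at the iterate `x` with momentum `m`. The weight
`2 / β - 2` is small enough for the descent of `Φ` to pay for the drift of `g`, and large enough for
the contraction of the tracking error to pay for its appearance in the descent inequality. -/
noncomputable def momentumPotential (Φ : E → ℝ) (g : E → E) (α β : ℝ) (x m : E) : ℝ :=
  2 / α * Φ x + (2 / β - 2) * ‖m - g x‖ ^ 2

lemma norm_sq_add_momentumPotential_le
    (hΦ : ∀ x y, Φ y ≤ Φ x + ⟪g x, y - x⟫ + L / 2 * ‖y - x‖ ^ 2)
    (hg : ∀ x y, ‖g x - g y‖ ≤ L * ‖x - y‖) (hα : 0 < α) (hβ0 : 0 < β) (hβ1 : β ≤ 1)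
    (hαL : α * L ≤ β / 2) {x m G m' : E} (hm' : m' = (1 - β) • m + β • G) :
    ‖g x‖ ^ 2 + momentumPotential Φ g α β (x - α • m') m' ≤
      momentumPotential Φ g α β x m + 2 * ‖G - g x‖ ^ 2 := by
  have hdescent : ‖g x‖ ^ 2 ≤ 2 / α * (Φ x - Φ (x - α • m')) + ‖m' - g x‖ ^ 2 -
      (1 - β / 2) * ‖m'‖ ^ 2 :=
    (norm_sq_le_of_quadratic_upper_bound hΦ hα x m').trans (by gcongr)
  have hdrift := weighted_norm_sub_gradient_step_sq_le hg hα.le hβ0 hβ1 hαL x m'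
  have htrack := weighted_norm_momentum_sub_sq_le hβ0 hβ1 m G (g x)
  rw [← hm'] at htrack
  unfold momentumPotential
  linarith

/-- `w` and `v` are the iterates and momenta of the first `T` steps of the momentum method with step
size `α` and averaging weight `β`, driven by the gradient estimates `G` from zero momentum. -/
structure IsMomentumRun (α β : ℝ) (T : ℕ) (G w v : ℕ → E) : Prop where
  momentum_zero : v 0 = 0
  momentum_succ : ∀ t < T, v (t + 1) = (1 - β) • v t + β • G t
  iterate_succ : ∀ t < T, w (t + 1) = w t - α • v (t + 1)

lemma IsMomentumRun.sum_norm_sq_le {T : ℕ} {G w v : ℕ → E} (hrun : IsMomentumRun α β T G w v)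
    (hΦ : ∀ x y, Φ y ≤ Φ x + ⟪g x, y - x⟫ + L / 2 * ‖y - x‖ ^ 2)
    (hg : ∀ x y, ‖g x - g y‖ ≤ L * ‖x - y‖) (hα : 0 < α) (hβ0 : 0 < β) (hβ1 : β ≤ 1)
    (hαL : α * L ≤ β / 2) :
    ∑ t ∈ Finset.range T, ‖g (w t)‖ ^ 2 ≤
      2 / α * (Φ (w 0) - Φ (w T)) + (2 / β - 2) * ‖g (w 0)‖ ^ 2 +
        2 * ∑ t ∈ Finset.range T, ‖G t - g (w t)‖ ^ 2 := by
  set P : ℕ → ℝ := fun t => momentumPotential Φ g α β (w t) (v t) with hP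
  have hstep : ∀ t ∈ Finset.range T,
      ‖g (w t)‖ ^ 2 ≤ (P t - P (t + 1)) + 2 * ‖G t - g (w t)‖ ^ 2 := by
    intro t ht
    rw [Finset.mem_range] at ht
    have hdecrease := norm_sq_add_momentumPotential_le hΦ hg hα hβ0 hβ1 hαL (x := w t)
      (hrun.momentum_succ t ht)
    rw [← hrun.iterate_succ t ht] at hdecrease
    linarith
  have hfirst : P 0 = 2 / α * Φ (w 0) + (2 / β - 2) * ‖g (w 0)‖ ^ 2 := by
    simp only [hP, momentumPotential, hrun.momentum_zero, zero_sub, norm_neg]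
  have hlast : 2 / α * Φ (w T) ≤ P T :=
    le_add_of_nonneg_right (mul_nonneg (two_div_sub_two_nonneg hβ0 hβ1) (sq_nonneg _))
  have hsum := Finset.sum_le_sum hstep
  rw [Finset.sum_add_distrib, Finset.sum_range_sub', ← Finset.mul_sum, hfirst] at hsum
  linarith

end Momentum

theorem stmt17_general {E : Type*} [NormedAddCommGroup E] [InnerProductSpace ℝ E]
    {F : E → ℝ} {ρ ν ε β α : ℝ} {T : ℕ} {p : E → E} {w v z : ℕ → E}
    (hF : WeaklyConvex ρ F) (hF_bdd : BddBelow (range F)) (hν : 0 < ν) (hνρ : ν * ρ < 1)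
    (hp : IsProxMap F ν p) (hβ0 : 0 < β) (hβ1 : β ≤ 1) (hα0 : 0 < α)
    (hα : α ≤ β / (2 * ((2 - ν * ρ) / (ν - ν ^ 2 * ρ)))) (hT : 1 ≤ T)
    (hz : ∀ t < T, ‖z t - p (w t)‖ ^ 2 ≤ ν ^ 2 * ε ^ 2 / 18)
    (hrun : IsMomentumRun α β T (fun t => ν⁻¹ • (w t - z t)) w v) :
    (T : ℝ)⁻¹ * ∑ t ∈ Finset.range T, ‖moreauGradient ν p (w t)‖ ^ 2 ≤
      2 * (moreauEnvelope F ν (w 0) - ⨅ u, moreauEnvelope F ν u) / (α * T) +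
        (2 / β - 1) * ‖moreauGradient ν p (w 0)‖ ^ 2 / T + ε ^ 2 / 3 := by
  set g := moreauGradient ν p
  set L := (2 - ν * ρ) / (ν - ν ^ 2 * ρ)
  have hνL : ν⁻¹ ≤ L := inv_le_two_sub_mul_div hν hνρ
  have hL : 0 < L := (inv_pos.2 hν).trans_le hνL
  have hαL : α * L ≤ β / 2 := by
    rw [le_div_iff₀ (by positivity)] at hα
    linarith
  have hsum := hrun.sum_norm_sq_le
    (fun x y => (hp.moreauEnvelope_le_add_inner x y).trans (by gcongr))
    (hp.norm_moreauGradient_sub_le hF hν hνρ) hα0 hβ0 hβ1 hαL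
  have hnoise : ∑ t ∈ Finset.range T, ‖ν⁻¹ • (w t - z t) - g (w t)‖ ^ 2 ≤ T * (ε ^ 2 / 18) := by
    refine (Finset.sum_le_card_nsmul _ _ (ε ^ 2 / 18) fun t ht => ?_).trans_eq (by simp)
    rw [norm_inv_smul_sub_sub_moreauGradient_sq, inv_mul_le_iff₀ (by positivity)]
    exact (hz t (Finset.mem_range.1 ht)).trans_eq (mul_div_assoc _ _ _)
  have hinf : ⨅ u, moreauEnvelope F ν u ≤ moreauEnvelope F ν (w T) :=
    ciInf_le (bddBelow_range_moreauEnvelope hF_bdd hν.le) (w T)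
  have hT0 : (0 : ℝ) < T := Nat.cast_pos.2 hT
  calc (T : ℝ)⁻¹ * ∑ t ∈ Finset.range T, ‖g (w t)‖ ^ 2
      ≤ (T : ℝ)⁻¹ * (2 / α * (moreauEnvelope F ν (w 0) - ⨅ u, moreauEnvelope F ν u) +
          (2 / β - 1) * ‖g (w 0)‖ ^ 2 + T * (ε ^ 2 / 3)) := by
        gcongr
        refine hsum.trans (add_le_add (by gcongr; norm_num) ?_)
        linarith [mul_nonneg hT0.le (sq_nonneg ε)]
    _ = _ := by field_simp

/-- Outer-loop convergence of the inexact momentum method on the Moreau envelope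
`Φ = F_ν` of a `ρ`-weakly convex, bounded-below `F`, where `∇Φ(w) = (w − prox_{νF}(w))/ν` and
`L = (2 − νρ)/(ν − ν²ρ)`. -/
theorem stmt17 (d : ℕ) (F : EuclideanSpace ℝ (Fin d) → ℝ) (ρ ν ε β α : ℝ) (T : ℕ)
    (hF_cont : Continuous F)
    (hρ : 0 < ρ)
    (hF_wc : ConvexOn ℝ Set.univ (fun x => F x + ρ / 2 * ‖x‖ ^ 2))
    (hF_bdd : BddBelow (Set.range F))
    (hν : 0 < ν) (hν' : ν < 1 / ρ)
    -- `p` is the proximal mapping of `F` with parameter `ν`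
    (p : EuclideanSpace ℝ (Fin d) → EuclideanSpace ℝ (Fin d))
    (hp : ∀ u v, F (p u) + ‖u - p u‖ ^ 2 / (2 * ν) ≤ F v + ‖u - v‖ ^ 2 / (2 * ν))
    (hε : 0 < ε) (hβ0 : 0 < β) (hβ : β ≤ 1 / 2)
    (hα0 : 0 < α) (hα : α ≤ β / (2 * ((2 - ν * ρ) / (ν - ν ^ 2 * ρ))))
    (hT : 1 ≤ T)
    (w v z : ℕ → EuclideanSpace ℝ (Fin d))
    (hv0 : v 0 = 0)
    (hz : ∀ t < T, ‖z t - p (w t)‖ ^ 2 ≤ ν ^ 2 * ε ^ 2 / 18)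
    (hvrec : ∀ t < T, v (t + 1) = (1 - β) • v t + (β / ν) • (w t - z t))
    (hwrec : ∀ t < T, w (t + 1) = w t - α • v (t + 1)) :
    (T : ℝ)⁻¹ * ∑ t ∈ Finset.range T, ‖ν⁻¹ • (w t - p (w t))‖ ^ 2 ≤
      2 * ((F (p (w 0)) + ‖w 0 - p (w 0)‖ ^ 2 / (2 * ν)) -
          ⨅ u : EuclideanSpace ℝ (Fin d), F (p u) + ‖u - p u‖ ^ 2 / (2 * ν)) / (α * T) +
        (2 / β - 1) * ‖ν⁻¹ • (w 0 - p (w 0))‖ ^ 2 / T + ε ^ 2 / 3 := by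
  have hprox : IsProxMap F ν p := fun u => isMinOn_univ_iff.2 (hp u)
  have hrun : IsMomentumRun α β T (fun t => ν⁻¹ • (w t - z t)) w v :=
    ⟨hv0, fun t ht => by rw [hvrec t ht, smul_smul, div_eq_mul_inv], hwrec⟩
  simpa only [hprox.moreauEnvelope_eq, proxObjective, moreauGradient] using
    stmt17_general hF_wc hF_bdd hν ((lt_div_iff₀ hρ).1 hν') hprox hβ0
      (hβ.trans one_half_lt_one.le) hα0 hα hT hz hrun
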